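/- (Key identity of Proposition 1.) Let τ ∈ (0,1), μ ∈ ℝ, σ > 0, let f denote the density of N(μ, σ²), and suppose 0 is the τ-quantile of N(μ, σ²), i.e. the N(μ, σ²) measure of (-∞, 0] equals τ. Then f(0) > 0 and the ratio α(τ) := [f″(0)]² / f(0) equals (1/σ⁵)·[(Φ⁻¹(τ))² - 1]²·φ(Φ⁻¹(τ)). -/

import Mathlib

open MeasureTheory ProbabilityTheory Real Set

/-- The standard normal density `φ(x) = (2π)^{-1/2} e^{-x²/2}`. -/
noncomputable def stdNormalPDF (x : ℝ) : ℝ :=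
  (Real.sqrt (2 * Real.pi))⁻¹ * Real.exp (-x ^ 2 / 2)

/-- The standard normal CDF `Φ`. -/
noncomputable def stdNormalCDF (x : ℝ) : ℝ :=
  ∫ t in Set.Iic x, stdNormalPDF t

/-- The standard normal quantile function `Φ⁻¹` (the inverse of `Φ`). -/
noncomputable def stdNormalQuantile : ℝ → ℝ :=
  Function.invFun stdNormalCDF

/-- The density of the `N(m, s²)` distribution:
`f(x) = (2πs²)^{-1/2} e^{-(x-m)²/(2s²)}`. -/
noncomputable def gaussDensity (m s x : ℝ) : ℝ :=
  (Real.sqrt (2 * Real.pi * s ^ 2))⁻¹ * Real.exp (-(x - m) ^ 2 / (2 * s ^ 2))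

/-!
By location-scale invariance, `f(x) = φ((x - μ)/σ)/σ` and `P(X ≤ x) = Φ((x - μ)/σ)`. The second
equation at `x = 0` gives `Φ⁻¹(τ) = -μ/σ`, because `Φ` is injective. The first one, with
`φ″(z) = (z² - 1)φ(z)`, gives `f″(x) = (z² - 1)φ(z)/σ³` for `z = (x - μ)/σ`, so that dividing
`f″(x)²` by `f(x)` leaves `(z² - 1)²φ(z)/σ⁵`.
-/

lemma strictMono_cdf (P : Measure ℝ) [IsProbabilityMeasure P] [P.IsOpenPosMeasure] :
    StrictMono (cdf P) := by
  intro a b hab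
  have hpos : 0 < (cdf P).measure (Ioc a b) := by
    rw [measure_cdf]
    exact ((Measure.measure_Ioo_pos P).2 hab).trans_le (measure_mono Ioo_subset_Ioc_self)
  rw [StieltjesFunction.measure_Ioc, ENNReal.ofReal_pos] at hpos
  exact sub_pos.1 hpos

lemma deriv_comp_sub_div {𝕜 E : Type*} [NontriviallyNormedField 𝕜] [NormedAddCommGroup E]
    [NormedSpace 𝕜 E] (g : 𝕜 → E) (a c x : 𝕜) :
    deriv (fun y ↦ g ((y - a) / c)) x = c⁻¹ • deriv g ((x - a) / c) := by
  rw [deriv_comp_sub_const (f := fun y ↦ g (y / c))]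
  simp only [div_eq_inv_mul]
  exact deriv_comp_mul_left c⁻¹ g (x - a)

lemma isOpenPosMeasure_gaussianReal (μ : ℝ) {v : NNReal} (hv : v ≠ 0) :
    (gaussianReal μ v).IsOpenPosMeasure :=
  (gaussianReal_absolutelyContinuous' μ hv).isOpenPosMeasure

lemma gaussianReal_map_sub_div (μ : ℝ) {σ : ℝ} (hσ : σ ≠ 0) :
    (gaussianReal μ (σ ^ 2).toNNReal).map (fun x ↦ (x - μ) / σ) = gaussianReal 0 1 := by
  have hvar : (σ ^ 2).toNNReal / .mk (σ ^ 2) (sq_nonneg σ) = 1 := by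
    ext
    simp [sq_nonneg, hσ]
  have hcomp : (fun x ↦ (x - μ) / σ) = (· / σ) ∘ (· - μ) := rfl
  rw [hcomp, ← Measure.map_map (by fun_prop) (by fun_prop), gaussianReal_map_sub_const,
    gaussianReal_map_div_const, hvar, sub_self, zero_div]

lemma stdNormalPDF_eq_gaussianPDFReal : stdNormalPDF = gaussianPDFReal 0 1 := by
  ext x
  simp [stdNormalPDF, gaussianPDFReal]

lemma stdNormalPDF_pos (x : ℝ) : 0 < stdNormalPDF x := by
  rw [stdNormalPDF_eq_gaussianPDFReal]
  exact gaussianPDFReal_pos 0 1 x one_ne_zero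

lemma deriv_stdNormalPDF : deriv stdNormalPDF = fun x ↦ -x * stdNormalPDF x := by
  ext x
  have hexponent : HasDerivAt (fun y : ℝ ↦ -y ^ 2 / 2) (-x) x :=
    ((hasDerivAt_pow 2 x).neg.div_const 2).congr_deriv (by push_cast; ring)
  refine (hexponent.exp.const_mul _).deriv.trans ?_
  unfold stdNormalPDF
  ring

lemma differentiable_stdNormalPDF : Differentiable ℝ stdNormalPDF := by
  unfold stdNormalPDF
  fun_prop

lemma deriv_deriv_stdNormalPDF (x : ℝ) :
    deriv (deriv stdNormalPDF) x = (x ^ 2 - 1) * stdNormalPDF x := by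
  rw [deriv_stdNormalPDF, deriv_fun_mul (by fun_prop) (differentiable_stdNormalPDF x),
    deriv_stdNormalPDF]
  simp only [deriv_neg]
  ring

lemma stdNormalCDF_eq_cdf : stdNormalCDF = cdf (gaussianReal 0 1) := by
  ext x
  have hnonneg : 0 ≤ stdNormalCDF x := integral_nonneg fun t ↦ (stdNormalPDF_pos t).le
  rw [cdf_eq_real, measureReal_def, gaussianReal_apply_eq_integral 0 one_ne_zero,
    ← stdNormalPDF_eq_gaussianPDFReal, ← stdNormalCDF, ENNReal.toReal_ofReal hnonneg]

lemma strictMono_stdNormalCDF : StrictMono stdNormalCDF := by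
  have := isOpenPosMeasure_gaussianReal 0 one_ne_zero
  rw [stdNormalCDF_eq_cdf]
  exact strictMono_cdf _

lemma stdNormalQuantile_stdNormalCDF (x : ℝ) : stdNormalQuantile (stdNormalCDF x) = x :=
  Function.leftInverse_invFun strictMono_stdNormalCDF.injective x

section LocationScale

variable (μ : ℝ) {σ : ℝ}

lemma gaussianReal_real_Iic (hσ : 0 < σ) (x : ℝ) :
    (gaussianReal μ (σ ^ 2).toNNReal).real (Iic x) = stdNormalCDF ((x - μ) / σ) := by
  have hpre : (fun y ↦ (y - μ) / σ) ⁻¹' Iic ((x - μ) / σ) = Iic x := by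
    ext y
    simp [div_le_div_iff_of_pos_right hσ]
  rw [stdNormalCDF_eq_cdf, cdf_eq_real, ← gaussianReal_map_sub_div μ hσ.ne',
    map_measureReal_apply (by fun_prop) measurableSet_Iic, hpre]

lemma gaussDensity_eq_stdNormalPDF_div (hσ : 0 < σ) (x : ℝ) :
    gaussDensity μ σ x = stdNormalPDF ((x - μ) / σ) / σ := by
  have hexponent : -(x - μ) ^ 2 / (2 * σ ^ 2) = -((x - μ) / σ) ^ 2 / 2 := by field
  rw [gaussDensity, stdNormalPDF, hexponent, sqrt_mul (by positivity), sqrt_sq hσ.le]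
  field

lemma gaussDensity_pos (hσ : σ ≠ 0) (x : ℝ) : 0 < gaussDensity μ σ x := by
  unfold gaussDensity
  positivity

lemma deriv_deriv_gaussDensity (hσ : 0 < σ) (x : ℝ) :
    deriv (deriv (gaussDensity μ σ)) x
      = (((x - μ) / σ) ^ 2 - 1) * stdNormalPDF ((x - μ) / σ) / σ ^ 3 := by
  have hderiv : deriv (gaussDensity μ σ) = fun y ↦ deriv stdNormalPDF ((y - μ) / σ) / σ ^ 2 := by
    ext y
    rw [funext (gaussDensity_eq_stdNormalPDF_div μ hσ), deriv_div_const,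
      deriv_comp_sub_div stdNormalPDF, smul_eq_mul]
    field
  rw [hderiv, deriv_div_const, deriv_comp_sub_div (deriv stdNormalPDF), smul_eq_mul,
    deriv_deriv_stdNormalPDF]
  field

lemma sq_deriv_deriv_gaussDensity_div (hσ : 0 < σ) (x : ℝ) :
    deriv (deriv (gaussDensity μ σ)) x ^ 2 / gaussDensity μ σ x
      = 1 / σ ^ 5 * (((x - μ) / σ) ^ 2 - 1) ^ 2 * stdNormalPDF ((x - μ) / σ) := by
  have hpdf := (stdNormalPDF_pos ((x - μ) / σ)).ne'
  rw [deriv_deriv_gaussDensity μ hσ, gaussDensity_eq_stdNormalPDF_div μ hσ]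
  field

lemma stdNormalQuantile_gaussianReal_real_Iic (hσ : 0 < σ) (x : ℝ) :
    stdNormalQuantile ((gaussianReal μ (σ ^ 2).toNNReal).real (Iic x)) = (x - μ) / σ := by
  rw [gaussianReal_real_Iic μ hσ, stdNormalQuantile_stdNormalCDF]

end LocationScale

/-- Key identity of Proposition 1: if `0` is the `τ`-quantile of `N(μ, σ²)` with density `f`,
then `f(0) > 0` and `α(τ) = [f″(0)]²/f(0) = (1/σ⁵)·[(Φ⁻¹(τ))² - 1]²·φ(Φ⁻¹(τ))`. -/
theorem stmt_7 (τ μ σ : ℝ) (hτ : τ ∈ Set.Ioo (0 : ℝ) 1) (hσ : 0 < σ)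
    (f : ℝ → ℝ) (hf : f = gaussDensity μ σ)
    (hq : (ProbabilityTheory.gaussianReal μ ((σ ^ 2).toNNReal)) (Set.Iic 0)
      = ENNReal.ofReal τ) :
    0 < f 0 ∧
    (deriv (deriv f) 0) ^ 2 / f 0
      = (1 / σ ^ 5) * ((stdNormalQuantile τ) ^ 2 - 1) ^ 2
        * stdNormalPDF (stdNormalQuantile τ) := by
  subst hf
  have hτ_eq : (gaussianReal μ (σ ^ 2).toNNReal).real (Iic 0) = τ := by
    rw [measureReal_def, hq, ENNReal.toReal_ofReal hτ.1.le]
  have hquantile : stdNormalQuantile τ = (0 - μ) / σ := by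
    rw [← hτ_eq, stdNormalQuantile_gaussianReal_real_Iic μ hσ]
  rw [hquantile]
  exact ⟨gaussDensity_pos μ hσ.ne' 0, sq_deriv_deriv_gaussDensity_div μ hσ 0⟩
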